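/- Let θ : G → ℂˣ be a character and let a be an integer with θ(J) = exp(2πi·a/d). Let k ≥ 1 and let f be a (θ,k)-equivariant polynomial for G. Then f can be written as a finite sum f = Σ_m f_m over integers m, where each f_m is a (θ,k)-equivariant polynomial for G that satisfies f_m(r(λ)·x) = λ^m f_m(x) for all λ ∈ ℂˣ and x ∈ ℂⁿ, and f_m = 0 unless m ≡ k·a (mod d). (This is the decomposition of G-invariant sections of L_θ^k into ℂ*_R-eigenspaces, whose weights are all congruent modulo d.) -/

import Mathlib

open Matrix Complex MvPolynomial

/-- The distinguished `d`-th root of unity `exp(2πi/d)` as a unit of `ℂ`. -/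
noncomputable def primRootUnit (d : ℕ) : ℂˣ :=
  Units.mk0 (Complex.exp (2 * (Real.pi : ℂ) * Complex.I / (d : ℂ))) (Complex.exp_ne_zero _)

/-- A polynomial `f` on `ℂⁿ` is `(θ,k)`-equivariant for the subgroup `G ≤ GL(n,ℂ)` if
`f(h·x) = θ(h)^k f(x)` for all `h ∈ G` and `x ∈ ℂⁿ`. -/
def IsEquivariant {n : ℕ} (G : Subgroup (GL (Fin n) ℂ)) (θ : ↥G →* ℂˣ) (k : ℕ)
    (f : MvPolynomial (Fin n) ℂ) : Prop :=
  ∀ (h : ↥G) (x : Fin n → ℂ),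
    eval (Matrix.mulVec (((h : GL (Fin n) ℂ) : Matrix (Fin n) (Fin n) ℂ)) x) f
      = ((θ h : ℂˣ) : ℂ) ^ k * eval x f

/-!
The components `f_m` are the weighted homogeneous components of `f` for the weights `c` of `r`.
Since `g ∈ G` commutes with `r`, comparing coefficients of `λ ^ m` in
`f (g (r λ x)) = θ(g)^k f (r λ x)` shows that every `f_m` is again equivariant; this is legitimate
because distinct characters `λ ↦ λ ^ m` are linearly independent. Evaluating a nonzero `f_m` along
`J = r ζ` in both ways gives `ζ ^ m = θ(J)^k = ζ ^ (k a)`, so `m ≡ k a` modulo the order of `ζ`.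
-/

instance infinite_units {K : Type*} [GroupWithZero K] [Infinite K] : Infinite Kˣ := by
  have : Infinite {x : K // x ≠ 0} := (Set.finite_singleton (0 : K)).infinite_compl.to_subtype
  exact Infinite.of_injective _ unitsEquivNeZero.symm.injective

section Characters

variable {R : Type*} [CommRing R] [IsDomain R] [Infinite Rˣ]

theorem exists_units_zpow_ne_one {m : ℤ} (hm : m ≠ 0) : ∃ l : Rˣ, l ^ m ≠ 1 := by
  by_contra! h
  have : NeZero m.natAbs := ⟨Int.natAbs_ne_zero.mpr hm⟩
  have htop : rootsOfUnity m.natAbs R = ⊤ :=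
    eq_top_iff.mpr fun l _ ↦ pow_natAbs_eq_one.mpr (h l)
  have hfin : Finite (⊤ : Subgroup Rˣ) := htop ▸ inferInstance
  exact not_finite_iff_infinite.mpr ‹Infinite Rˣ› (Subgroup.topEquiv.finite_iff.mp hfin)

theorem zpowGroupHom_units_injective :
    Function.Injective (zpowGroupHom : ℤ → Rˣ →* Rˣ) := by
  intro p q hpq
  by_contra hne
  obtain ⟨l, hl⟩ := exists_units_zpow_ne_one (R := R) (sub_ne_zero.mpr hne)
  have hlpq : l ^ p = l ^ q := DFunLike.congr_fun hpq l
  exact hl (by rw [_root_.zpow_sub, hlpq, mul_inv_cancel])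

theorem linearIndependent_units_zpow :
    LinearIndependent R fun (m : ℤ) (l : Rˣ) ↦ ((l ^ m : Rˣ) : R) := by
  have hinj : Function.Injective fun m : ℤ ↦ (Units.coeHom R).comp (zpowGroupHom m) :=
    fun _ _ h ↦ zpowGroupHom_units_injective <|
      MonoidHom.ext fun l ↦ Units.ext (DFunLike.congr_fun h l)
  exact (linearIndependent_monoidHom Rˣ R).comp _ hinj

end Characters

/-- The linear action of a unit `l` on `R^σ` with integer weights `c`, that is, the action of the
diagonal matrix with entries `l ^ c i`; `σ` may be infinite. -/
def weightScale {R σ : Type*} [CommSemiring R] (c : σ → ℤ) (l : Rˣ) (x : σ → R) : σ → R :=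
  fun i ↦ ((l ^ c i : Rˣ) : R) * x i

/-- `f` is a semi-invariant of weight `t` for a self-map `g` of `R^σ`: `f ∘ g = t f`. It covers both
`(θ,k)`-equivariance (`g ∈ G`, `t = θ(g)^k`) and `r`-eigenpolynomials (`g = r(λ)`, `t = λ^m`). -/
def IsSemiInvariant {R σ : Type*} [CommSemiring R] (g : (σ → R) → σ → R) (t : R)
    (f : MvPolynomial σ R) : Prop :=
  ∀ x, eval (g x) f = t * eval x f

theorem zpow_weight {A σ : Type*} [CommGroup A] (c : σ → ℤ) (l : A) (e : σ →₀ ℕ) :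
    l ^ Finsupp.weight c e = e.prod fun i j ↦ (l ^ c i) ^ j := by
  induction e using Finsupp.induction_linear with
  | zero => simp
  | add e₁ e₂ h₁ h₂ =>
    rw [map_add, _root_.zpow_add, h₁, h₂, Finsupp.prod_add_index' (by simp) fun _ ↦ pow_add _]
  | single i j => simp [Finsupp.weight_single, mul_comm, _root_.zpow_mul]

theorem isSemiInvariant_weightScale {R σ : Type*} [CommSemiring R] {c : σ → ℤ} {m : ℤ}
    {p : MvPolynomial σ R} (hp : IsWeightedHomogeneous c p m) (l : Rˣ) :
    IsSemiInvariant (weightScale c l) ((l ^ m : Rˣ) : R) p := by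
  intro x
  rw [eval_eq, eval_eq, Finset.mul_sum]
  refine Finset.sum_congr rfl fun e he ↦ ?_
  have hweight : ((l ^ m : Rˣ) : R) = ∏ i ∈ e.support, ((l ^ c i : Rˣ) : R) ^ e i := by
    rw [← hp (mem_support_iff.mp he), zpow_weight, Finsupp.prod, Units.coe_prod]
    simp only [Units.val_pow_eq_pow_val]
  simp only [weightScale, mul_pow, Finset.prod_mul_distrib]
  rw [hweight, mul_left_comm]

theorem eval_weightScale {R σ : Type*} [CommSemiring R] (c : σ → ℤ) (f : MvPolynomial σ R)
    (l : Rˣ) (x : σ → R) :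
    eval (weightScale c l x) f =
      ∑ m ∈ (weightedHomogeneousComponent_finsupp (w := c) f).toFinset,
        ((l ^ m : Rˣ) : R) * eval x (weightedHomogeneousComponent c m f) := by
  conv_lhs => rw [← sum_weightedHomogeneousComponent c f,
    finsum_eq_sum _ (weightedHomogeneousComponent_finsupp f), map_sum]
  exact Finset.sum_congr rfl fun m _ ↦
    isSemiInvariant_weightScale (weightedHomogeneousComponent_isWeightedHomogeneous m f) l x

namespace IsSemiInvariant

variable {R σ : Type*} [CommRing R] [IsDomain R]

theorem weight_unique [Infinite R] {g : (σ → R) → σ → R} {s t : R} {f : MvPolynomial σ R}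
    (hs : IsSemiInvariant g s f) (ht : IsSemiInvariant g t f) (hf : f ≠ 0) : s = t := by
  obtain ⟨x, hx⟩ : ∃ x, eval x f ≠ 0 := by
    by_contra! h
    exact hf (MvPolynomial.funext fun x ↦ by rw [h x, map_zero])
  exact mul_right_cancel₀ hx ((hs x).symm.trans (ht x))

protected theorem weightedHomogeneousComponent [Infinite Rˣ] {c : σ → ℤ}
    {g : (σ → R) → σ → R} {t : R} {f : MvPolynomial σ R} (hf : IsSemiInvariant g t f)
    (hg : ∀ l : Rˣ, Function.Commute g (weightScale c l)) (m : ℤ) :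
    IsSemiInvariant g t (weightedHomogeneousComponent c m f) := by
  intro x
  by_cases hm : weightedHomogeneousComponent c m f = 0
  · simp only [hm, map_zero, mul_zero]
  refine linearIndependent_iff'ₛ.mp linearIndependent_units_zpow
    (weightedHomogeneousComponent_finsupp f).toFinset
    (fun j ↦ eval (g x) (weightedHomogeneousComponent c j f))
    (fun j ↦ t * eval x (weightedHomogeneousComponent c j f)) ?_ m
    ((Set.Finite.mem_toFinset _).mpr hm)
  funext l
  have hlaurent := hf (weightScale c l x)
  rw [hg l x, eval_weightScale, eval_weightScale, Finset.mul_sum] at hlaurent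
  simpa only [Finset.sum_apply, Pi.smul_apply, smul_eq_mul, mul_comm, mul_left_comm]
    using hlaurent

end IsSemiInvariant

theorem stmt_7_general {R σ : Type*} [CommRing R] [IsDomain R] [Infinite Rˣ]
    [Fintype σ] [DecidableEq σ] {d : ℕ} {G : Subgroup (GL σ R)} {c : σ → ℤ}
    {r : Rˣ →* GL σ R} (hrdiag : ∀ l, (r l : Matrix σ σ R) = diagonal fun i ↦ ((l ^ c i : Rˣ) : R))
    (hcomm : ∀ g ∈ G, ∀ l, g * r l = r l * g)
    {ζ : Rˣ} (hζ : IsPrimitiveRoot ζ d) (hζG : r ζ ∈ G)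
    {θ : G →* Rˣ} {a : ℤ} (hθ : θ ⟨r ζ, hζG⟩ = ζ ^ a) {k : ℕ} {f : MvPolynomial σ R}
    (hf : ∀ h : G, IsSemiInvariant ((h : GL σ R) : Matrix σ σ R).mulVec ((θ h : R) ^ k) f) :
    ∃ F : ℤ → MvPolynomial σ R,
      (Function.support F).Finite ∧
      f = ∑ᶠ m, F m ∧
      (∀ m, ∀ h : G,
        IsSemiInvariant ((h : GL σ R) : Matrix σ σ R).mulVec ((θ h : R) ^ k) (F m)) ∧
      (∀ m l, IsSemiInvariant (r l : Matrix σ σ R).mulVec ((l ^ m : Rˣ) : R) (F m)) ∧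
      (∀ m, ¬ (d : ℤ) ∣ m - k * a → F m = 0) := by
  have hr (l : Rˣ) : (r l : Matrix σ σ R).mulVec = weightScale c l := by
    funext x i
    rw [hrdiag, mulVec_diagonal, weightScale]
  have hG (m : ℤ) (h : G) := (hf h).weightedHomogeneousComponent (c := c) (fun l x ↦ by
    rw [← hr, mulVec_mulVec, mulVec_mulVec, ← Units.val_mul, ← Units.val_mul, hcomm h h.2]) m
  have hR (m : ℤ) (l : Rˣ) : IsSemiInvariant (r l : Matrix σ σ R).mulVec ((l ^ m : Rˣ) : R)
      (weightedHomogeneousComponent c m f) :=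
    hr l ▸ isSemiInvariant_weightScale (weightedHomogeneousComponent_isWeightedHomogeneous m f) l
  refine ⟨fun m ↦ weightedHomogeneousComponent c m f, weightedHomogeneousComponent_finsupp f,
    (sum_weightedHomogeneousComponent c f).symm, hG, hR, fun m hm ↦ ?_⟩
  by_contra hne
  have : Infinite R := Infinite.of_injective _ Units.val_injective
  have hweights : ζ ^ m = ζ ^ (k * a) := by
    have hval := (hR m ζ).weight_unique (hG m ⟨r ζ, hζG⟩) hne
    rw [hθ, ← Units.val_pow_eq_pow_val, ← _root_.zpow_natCast, ← _root_.zpow_mul, mul_comm] at hval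
    exact Units.ext hval
  exact hm ((hζ.zpow_eq_one_iff_dvd _).mp (by rw [_root_.zpow_sub, hweights, mul_inv_cancel]))

theorem isPrimitiveRoot_primRootUnit {d : ℕ} (hd : d ≠ 0) : IsPrimitiveRoot (primRootUnit d) d :=
  IsPrimitiveRoot.coe_units_iff.mp (Complex.isPrimitiveRoot_exp d hd)

theorem coe_primRootUnit_zpow (d : ℕ) (a : ℤ) :
    ((primRootUnit d ^ a : ℂˣ) : ℂ) = Complex.exp (2 * Real.pi * Complex.I * a / d) := by
  rw [Units.val_zpow_eq_zpow_val, primRootUnit, Units.val_mk0, ← Complex.exp_int_mul]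
  ring_nf

/-- a `(θ,k)`-equivariant polynomial decomposes as a finite sum of
`(θ,k)`-equivariant `ℂ*_R`-eigenpolynomials `f_m` (with `f(r(λ)·x) = λ^m f(x)`), and
`f_m = 0` unless `m ≡ k·a (mod d)`, where `θ(J) = exp(2πi·a/d)`. -/
theorem stmt_7 (n d : ℕ) (hn : 1 ≤ n) (hd : 1 ≤ d)
    (G : Subgroup (GL (Fin n) ℂ))
    (c : Fin n → ℤ)
    (r : ℂˣ →* GL (Fin n) ℂ)
    (hrdiag : ∀ l : ℂˣ,
      ((r l : GL (Fin n) ℂ) : Matrix (Fin n) (Fin n) ℂ)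
        = Matrix.diagonal fun i => ((l ^ c i : ℂˣ) : ℂ))
    (hrinj : Function.Injective r)
    (hcomm : ∀ g ∈ G, ∀ l : ℂˣ, g * r l = r l * g)
    (hGr : (G : Set (GL (Fin n) ℂ)) ∩ Set.range r = r '' {l : ℂˣ | l ^ d = 1})
    (hJG : r (primRootUnit d) ∈ G)
    (θ : ↥G →* ℂˣ) (a : ℤ)
    (hθJ : ((θ ⟨r (primRootUnit d), hJG⟩ : ℂˣ) : ℂ)
      = Complex.exp (2 * (Real.pi : ℂ) * Complex.I * (a : ℂ) / (d : ℂ)))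
    (k : ℕ) (hk : 1 ≤ k)
    (f : MvPolynomial (Fin n) ℂ) (hf : IsEquivariant G θ k f) :
    ∃ F : ℤ → MvPolynomial (Fin n) ℂ,
      (Function.support F).Finite ∧
      f = ∑ᶠ m : ℤ, F m ∧
      (∀ m : ℤ, IsEquivariant G θ k (F m)) ∧
      (∀ (m : ℤ) (l : ℂˣ) (x : Fin n → ℂ),
        eval (Matrix.mulVec (((r l : GL (Fin n) ℂ) : Matrix (Fin n) (Fin n) ℂ)) x) (F m)
          = ((l ^ m : ℂˣ) : ℂ) * eval x (F m)) ∧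
      (∀ m : ℤ, ¬ ((d : ℤ) ∣ (m - k * a)) → F m = 0) := by
  have hθ := Units.ext (hθJ.trans (coe_primRootUnit_zpow d a).symm)
  exact stmt_7_general hrdiag hcomm (isPrimitiveRoot_primRootUnit (by omega)) hJG hθ hf
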